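/- arXiv:1709.03268 — 2 statements merged into one kernel-verified Lean document; each statement's English description precedes it below -/
import Mathlib

section
/- If the ideals a and b are linked by I over M (that is, I ⊆ a ∩ b is generated by an M-regular sequence, aM ≠ M ≠ bM, bM = IM :_M a, aM = IM :_M b), then grade(a, M) = grade(b, M) = grade(I, M). -/
open RingTheory.Sequence

/-- The colon submodule `N :_M a = {m ∈ M | a m ⊆ N}`. -/
def Submodule.colonBy {R M : Type*} [CommRing R] [AddCommGroup M] [Module R M]
    (N : Submodule R M) (a : Ideal R) : Submodule R M :=
  ⨅ r ∈ a, N.comap (LinearMap.lsmul R M r)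
/-- `a` and `b` are linked by `I` over `M`: `I ⊆ a ∩ b` is generated by an `M`-regular
sequence, `aM ≠ M ≠ bM`, `IM :_M a = bM` and `IM :_M b = aM`. -/
def Ideal.LinkedBy (R M : Type*) [CommRing R] [AddCommGroup M] [Module R M]
    (a b I : Ideal R) : Prop :=
  I ≤ a ⊓ b ∧
  (∃ rs : List R, I = Ideal.ofList rs ∧ RingTheory.Sequence.IsRegular M rs) ∧
  a • (⊤ : Submodule R M) ≠ ⊤ ∧ b • (⊤ : Submodule R M) ≠ ⊤ ∧
  (I • ⊤ : Submodule R M).colonBy a = b • (⊤ : Submodule R M) ∧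
  (I • ⊤ : Submodule R M).colonBy b = a • (⊤ : Submodule R M)
/-- The `M`-grade of an ideal `c`: the length of a maximal `M`-regular sequence
with entries in `c`. -/
noncomputable def Module.grade (R : Type*) [CommRing R] (c : Ideal R)
    (M : Type*) [AddCommGroup M] [Module R M] : ℕ :=
  sSup {n | ∃ rs : List R, rs.length = n ∧ (∀ r ∈ rs, r ∈ c) ∧
    RingTheory.Sequence.IsRegular M rs}

/-!
If `c` contains a weakly `M`-regular sequence of length `n`, then `Extⁱ(N, M) = 0` for all `i < n`
and all `N` annihilated by `c`; passing from `M` to `M / rM` with `r` an `M`-regular element costs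
only one degree of this vanishing. Hence, if `c` contains a weakly regular sequence longer than a
weakly regular sequence `rs`, then `Hom(N, M / (rs)M) = 0`, so `(rs)M :_M c = (rs)M`. Consequently
a regular sequence `rs` in `c` with `(rs)M :_M c ≠ (rs)M` has length `grade(c, M)`. When `I = (rs)`
links `a` and `b`, this applies to `I`, as `IM :_M I = M`, and to `a` and `b`: were `IM :_M a = IM`,
then `bM = IM`, hence `aM = IM :_M b = M`.
-/

open CategoryTheory Abelian

universe u v w

section Ext

variable {R : Type u} [CommRing R] [Small.{w} R] {N M : ModuleCat.{w} R} {r : R} {i : ℕ}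

lemma subsingleton_ext_quotSMulTop (hr : IsSMulRegular M r) (hi : Subsingleton (Ext N M i))
    (hi_succ : Subsingleton (Ext N M (i + 1))) :
    Subsingleton (Ext N (ModuleCat.of R (QuotSMulTop r M)) i) := by
  refine subsingleton_of_forall_eq 0 fun x ↦ ?_
  obtain ⟨y, rfl⟩ := Ext.covariant_sequence_exact₃ N hr.smulShortComplex_shortExact x rfl
    (hi_succ.elim _ _)
  obtain rfl : y = 0 := hi.elim _ _
  exact Ext.zero_comp ..

lemma isSMulRegular_ext_zero (hr : IsSMulRegular M r) : IsSMulRegular (Ext N M 0) r :=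
  have := hr.smulShortComplex_shortExact.mono_f
  (Ext.postcomp_smul_id_mono_iff r 0).mp
    (Ext.mono_postcomp_mk₀_of_mono N (M.smulShortComplex r).f)

lemma isSMulRegular_ext_succ (hr : IsSMulRegular M r)
    (hi : Subsingleton (Ext N (ModuleCat.of R (QuotSMulTop r M)) i)) :
    IsSMulRegular (Ext N M (i + 1)) r := by
  refine IsSMulRegular.of_right_eq_zero_of_smul fun x hx ↦ ?_
  rw [Ext.smul_eq_comp_mk₀, ← ModuleCat.smulShortComplex_f_eq_smul_id] at hx
  obtain ⟨y, rfl⟩ := Ext.covariant_sequence_exact₁ N hr.smulShortComplex_shortExact x hx rfl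
  obtain rfl : y = 0 := hi.elim _ _
  exact Ext.zero_comp ..

lemma subsingleton_ext_of_isSMulRegular_of_mem_annihilator (hr : IsSMulRegular (Ext N M i) r)
    (hrN : r ∈ Module.annihilator R N) : Subsingleton (Ext N M i) := by
  have := (Ext.postcomp_smul_id_mono_iff r i).mpr hr
  exact AddCommGrpCat.subsingleton_of_isZero <|
    Limits.IsZero.of_mono_eq_zero _ (Ext.postcomp_smul_id_eq_zero_of_mem_annihilator hrN i)

lemma subsingleton_ext_of_isWeaklyRegular {rs : List R} (hrs : IsWeaklyRegular M rs)
    (hrsN : ∀ r ∈ rs, r ∈ Module.annihilator R N) (hi : i < rs.length) :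
    Subsingleton (Ext N M i) := by
  induction rs generalizing M i with
  | nil => exact absurd hi (Nat.not_lt_zero i)
  | cons r rs ih =>
    obtain ⟨hr, hrs⟩ := (isWeaklyRegular_cons_iff M r rs).mp hrs
    obtain ⟨hrN, hrsN⟩ := List.forall_mem_cons.mp hrsN
    refine subsingleton_ext_of_isSMulRegular_of_mem_annihilator ?_ hrN
    cases i with
    | zero => exact isSMulRegular_ext_zero hr
    | succ i =>
      exact isSMulRegular_ext_succ hr
        (ih (M := ModuleCat.of R (QuotSMulTop r M)) hrs hrsN (Nat.lt_of_succ_lt_succ hi))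

lemma subsingleton_linearMap_quotient_of_subsingleton_ext {rs : List R}
    (hrs : IsWeaklyRegular M rs) (hext : ∀ i ≤ rs.length, Subsingleton (Ext N M i)) :
    Subsingleton (N →ₗ[R] M ⧸ (Ideal.ofList rs • ⊤ : Submodule R M)) := by
  induction rs generalizing M with
  | nil =>
    have := hext 0 le_rfl
    let e : (M ⧸ (Ideal.ofList ([] : List R) • ⊤ : Submodule R M)) ≃ₗ[R] M :=
      Submodule.quotEquivOfEqBot _ (by rw [Ideal.ofList_nil, Submodule.bot_smul])
    exact (((LinearEquiv.refl R N).arrowCongr e).toEquiv.trans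
      (ModuleCat.homEquiv.symm.trans Ext.homEquiv₀.symm)).subsingleton
  | cons r rs ih =>
    obtain ⟨hr, hrs⟩ := (isWeaklyRegular_cons_iff M r rs).mp hrs
    have := ih (M := ModuleCat.of R (QuotSMulTop r M)) hrs fun i hi ↦
      subsingleton_ext_quotSMulTop hr (hext i (Nat.le_succ_of_le hi))
        (hext (i + 1) (Nat.succ_le_succ hi))
    exact ((LinearEquiv.refl R N).arrowCongr
      (Submodule.quotOfListConsSMulTopEquivQuotSMulTopInner M r rs)).toEquiv.subsingleton

end Ext

lemma subsingleton_linearMap_quotient_of_length_lt {R : Type u} {N : Type v} {M : Type w}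
    [CommRing R] [AddCommGroup N] [Module R N] [AddCommGroup M] [Module R M] {xs ys : List R}
    (hxs : IsWeaklyRegular M xs) (hys : IsWeaklyRegular M ys)
    (hysN : ∀ y ∈ ys, y ∈ Module.annihilator R N) (hlt : xs.length < ys.length) :
    Subsingleton (N →ₗ[R] M ⧸ (Ideal.ofList xs • ⊤ : Submodule R M)) := by
  let eN : N ≃ₗ[R] ULift.{max u w} N := ULift.moduleEquiv.symm
  let eM : M ≃ₗ[R] ULift.{max u v} M := ULift.moduleEquiv.symm
  let eQ := Submodule.Quotient.equiv (Ideal.ofList xs • ⊤ : Submodule R M)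
    (Ideal.ofList xs • ⊤) eM (by simp [Submodule.map_smul''])
  have hext : ∀ i ≤ xs.length, Subsingleton
      (Ext (ModuleCat.of R (ULift.{max u w} N)) (ModuleCat.of R (ULift.{max u v} M)) i) :=
    fun i hi ↦ subsingleton_ext_of_isWeaklyRegular ((eM.isWeaklyRegular_congr ys).mp hys)
      (fun y hy ↦ eN.annihilator_eq ▸ hysN y hy) (hi.trans_lt hlt)
  have := subsingleton_linearMap_quotient_of_subsingleton_ext
    ((eM.isWeaklyRegular_congr xs).mp hxs) hext
  exact (eN.arrowCongr eQ).toEquiv.subsingleton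

section Colon

variable {R M : Type*} [CommRing R] [AddCommGroup M] [Module R M]

lemma mem_colonBy {N : Submodule R M} {c : Ideal R} {m : M} :
    m ∈ N.colonBy c ↔ ∀ r ∈ c, r • m ∈ N := by
  simp [Submodule.colonBy]

lemma le_colonBy (N : Submodule R M) (c : Ideal R) : N ≤ N.colonBy c :=
  fun _ hm ↦ mem_colonBy.mpr fun r _ ↦ N.smul_mem r hm

lemma colonBy_eq_top_iff {N : Submodule R M} {c : Ideal R} :
    N.colonBy c = ⊤ ↔ c • (⊤ : Submodule R M) ≤ N := by
  simp only [Submodule.eq_top_iff', mem_colonBy, Submodule.smul_le, Submodule.mem_top,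
    forall_const]
  exact ⟨fun h r hr m ↦ h m r hr, fun h m r hr ↦ h r hr m⟩

lemma colonBy_eq_self_of_length_lt {c : Ideal R} {xs ys : List R} (hxs : IsWeaklyRegular M xs)
    (hys : IsWeaklyRegular M ys) (hysc : ∀ y ∈ ys, y ∈ c) (hlt : xs.length < ys.length) :
    (Ideal.ofList xs • ⊤ : Submodule R M).colonBy c = Ideal.ofList xs • ⊤ := by
  refine le_antisymm (fun m hm ↦ ?_) (le_colonBy _ c)
  let q : M ⧸ (Ideal.ofList xs • ⊤ : Submodule R M) := Submodule.Quotient.mk m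
  have hq : ∀ r ∈ c, r • q = 0 := fun r hr ↦
    (Submodule.Quotient.mk_eq_zero _).mpr (mem_colonBy.mp hm r hr)
  have := subsingleton_linearMap_quotient_of_length_lt (N := Submodule.span R {q}) hxs hys
    (fun y hy ↦ (Submodule.mem_annihilator_span_singleton q y).mpr (hq y (hysc y hy))) hlt
  have hq_zero : q = 0 := LinearMap.congr_fun
    (Subsingleton.elim (Submodule.span R {q}).subtype 0) ⟨q, Submodule.mem_span_singleton_self q⟩
  exact (Submodule.Quotient.mk_eq_zero _).mp hq_zero

lemma grade_eq_length_of_colonBy_ne {c : Ideal R} {rs : List R} (hrs : IsRegular M rs)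
    (hrsc : ∀ r ∈ rs, r ∈ c)
    (hc : (Ideal.ofList rs • ⊤ : Submodule R M).colonBy c ≠ Ideal.ofList rs • ⊤) :
    Module.grade R c M = rs.length := by
  refine IsGreatest.csSup_eq ⟨⟨rs, rfl, hrsc, hrs⟩, ?_⟩
  rintro _ ⟨ys, rfl, hysc, hys⟩
  exact not_lt.mp fun hlt ↦ hc <|
    colonBy_eq_self_of_length_lt hrs.toIsWeaklyRegular hys.toIsWeaklyRegular hysc hlt

lemma grade_ofList {rs : List R} (hrs : IsRegular M rs) :
    Module.grade R (Ideal.ofList rs) M = rs.length :=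
  grade_eq_length_of_colonBy_ne hrs (fun _ hr ↦ Ideal.subset_span hr) fun h ↦
    hrs.top_ne_smul ((colonBy_eq_top_iff.mpr le_rfl).symm.trans h)

end Colon

namespace Ideal.LinkedBy

variable {R M : Type*} [CommRing R] [AddCommGroup M] [Module R M] {a b I : Ideal R}

lemma symm (h : LinkedBy R M a b I) : LinkedBy R M b a I :=
  let ⟨hI, hreg, ha, hb, hcolon_a, hcolon_b⟩ := h
  ⟨inf_comm a b ▸ hI, hreg, hb, ha, hcolon_b, hcolon_a⟩

lemma colonBy_ne (h : LinkedBy R M a b I) :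
    (I • ⊤ : Submodule R M).colonBy a ≠ I • (⊤ : Submodule R M) := by
  obtain ⟨-, -, ha, -, hcolon_a, hcolon_b⟩ := h
  intro hcolon
  have hbI : b • (⊤ : Submodule R M) = I • ⊤ := hcolon_a.symm.trans hcolon
  exact ha (hcolon_b.symm.trans (colonBy_eq_top_iff.mpr hbI.le))

lemma grade_eq (h : LinkedBy R M a b I) : Module.grade R a M = Module.grade R I M := by
  obtain ⟨rs, rfl, hrs⟩ := h.2.1
  have hrsa : ∀ r ∈ rs, r ∈ a := fun r hr ↦ (h.1 (subset_span hr)).1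
  rw [grade_eq_length_of_colonBy_ne hrs hrsa h.colonBy_ne, grade_ofList hrs]

end Ideal.LinkedBy

theorem grade_eq_of_linked_general {R M : Type*} [CommRing R] [AddCommGroup M] [Module R M]
    (a b I : Ideal R) (h : Ideal.LinkedBy R M a b I) :
    Module.grade R a M = Module.grade R b M ∧ Module.grade R b M = Module.grade R I M :=
  ⟨h.grade_eq.trans h.symm.grade_eq.symm, h.symm.grade_eq⟩

/-- If `a` and `b` are linked by `I` over `M` then
`grade(a, M) = grade(b, M) = grade(I, M)`. -/
theorem grade_eq_of_linked {R M : Type*} [CommRing R] [IsNoetherianRing R]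
    [AddCommGroup M] [Module R M] [Module.Finite R M]
    (a b I : Ideal R) (h : Ideal.LinkedBy R M a b I) :
    Module.grade R a M = Module.grade R b M ∧ Module.grade R b M = Module.grade R I M :=
  grade_eq_of_linked_general a b I h
end

section
/- Suppose a and b are geometrically linked by I over M, i.e., a ∼_{(I;M)} b and aM ∩ bM = IM. Then Ass(M/aM) ∩ Ass(M/bM) = ∅. -/
open RingTheory.Sequence

/-!
Every element of `b` sends `M` into `bM`, so `aM ∩ bM = IM` gives `aM :_M b = IM :_M b = aM`: no
nonzero element of `M/aM` is killed by `b`, nor, by iteration, by a power of `b`. Since `b` is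
finitely generated, it is contained in no associated prime of `M/aM`, whereas every associated prime
of `M/bM` contains it.
-/

section ColonBy

variable {R M : Type*} [CommRing R] [AddCommGroup M] [Module R M]
  {N K : Submodule R M} {a b : Ideal R} {x : M}

theorem mem_colonBy_s10 : x ∈ N.colonBy a ↔ ∀ r ∈ a, r • x ∈ N := by
  simp [Submodule.colonBy]

theorem mem_colonBy_iff_le_colon : x ∈ N.colonBy a ↔ a ≤ N.colon {x} := by
  simp only [mem_colonBy_s10, SetLike.le_def, Submodule.mem_colon_singleton]

theorem colonBy_mono (h : N ≤ K) : N.colonBy a ≤ K.colonBy a :=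
  fun _ hx => mem_colonBy_s10.mpr fun r hr => h (mem_colonBy_s10.mp hx r hr)

theorem colonBy_inf_smul_top : (N ⊓ a • ⊤).colonBy a = N.colonBy a := by
  refine le_antisymm (colonBy_mono inf_le_left) fun x hx => mem_colonBy_s10.mpr fun r hr => ?_
  exact ⟨mem_colonBy_s10.mp hx r hr, Submodule.smul_mem_smul hr Submodule.mem_top⟩

theorem colonBy_one : N.colonBy 1 = N := by
  ext x
  rw [mem_colonBy_iff_le_colon, Ideal.one_eq_top, top_le_iff, Submodule.colon_eq_top_iff_subset,
    Set.singleton_subset_iff, SetLike.mem_coe]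

theorem colonBy_mul : N.colonBy (a * b) = (N.colonBy a).colonBy b := by
  ext x
  rw [mem_colonBy_iff_le_colon, Ideal.mul_le, forall₂_comm]
  simp only [mem_colonBy_s10, Submodule.mem_colon_singleton, mul_smul]

theorem colonBy_pow_le (h : N.colonBy b ≤ N) (n : ℕ) : N.colonBy (b ^ n) ≤ N := by
  induction n with
  | zero => rw [pow_zero, colonBy_one]
  | succ n ih =>
    calc N.colonBy (b ^ (n + 1)) = (N.colonBy (b ^ n)).colonBy b := by rw [pow_succ, colonBy_mul]
      _ ≤ N.colonBy b := colonBy_mono ih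
      _ ≤ N := h

end ColonBy

section AssociatedPrimes

variable {R M : Type*} [CommRing R] [AddCommGroup M] [Module R M]
  {N K : Submodule R M} {b p : Ideal R}

theorem bot_colon_singleton_mk (x : M) :
    (⊥ : Submodule R (M ⧸ N)).colon {Submodule.Quotient.mk x} = N.colon {x} := by
  ext r
  rw [Submodule.mem_colon_singleton, Submodule.mem_colon_singleton, Submodule.mem_bot,
    ← Submodule.Quotient.mk_smul, Submodule.Quotient.mk_eq_zero]

theorem not_le_of_isAssociatedPrime_quotient (hb : b.FG) (h : N.colonBy b ≤ N)
    (hp : IsAssociatedPrime p (M ⧸ N)) : ¬ b ≤ p := by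
  intro hbp
  obtain ⟨y, hy⟩ := hp.eq_radical_colon
  obtain ⟨x, rfl⟩ := Submodule.Quotient.mk_surjective N y
  rw [bot_colon_singleton_mk] at hy
  obtain ⟨n, hn⟩ := Ideal.exists_pow_le_of_le_radical_of_fg (hbp.trans_eq hy) hb
  have hx : x ∈ N := colonBy_pow_le h n (mem_colonBy_iff_le_colon.mpr hn)
  have hcolon : N.colon {x} = ⊤ :=
    (Submodule.colon_eq_top_iff_subset _).mpr (Set.singleton_subset_iff.mpr hx)
  exact hp.isPrime.ne_top (by rw [hy, hcolon, Ideal.radical_top])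

theorem le_of_isAssociatedPrime_quotient_smul_top
    (hp : IsAssociatedPrime p (M ⧸ (b • ⊤ : Submodule R M))) : b ≤ p := by
  have hann : b ≤ Module.annihilator R (M ⧸ (b • ⊤ : Submodule R M)) :=
    (Module.isTorsionBySet_iff_subset_annihilator R _).mp
      (Module.isTorsionBySet_quotient_ideal_smul M b)
  exact hann.trans (Submodule.annihilator_top.ge.trans hp.annihilator_le)

theorem ass_disjoint_of_geometrically_linked_general (hb : b.FG) (hcolon : K.colonBy b ≤ N)
    (hinf : N ⊓ b • ⊤ ≤ K) :
    associatedPrimes R (M ⧸ N) ∩ associatedPrimes R (M ⧸ (b • ⊤ : Submodule R M)) = ∅ := by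
  have hN : N.colonBy b ≤ N :=
    calc N.colonBy b = (N ⊓ b • ⊤).colonBy b := colonBy_inf_smul_top.symm
      _ ≤ K.colonBy b := colonBy_mono hinf
      _ ≤ N := hcolon
  refine Set.eq_empty_of_forall_notMem fun p ⟨hpN, hpb⟩ => ?_
  exact not_le_of_isAssociatedPrime_quotient hb hN hpN
    (le_of_isAssociatedPrime_quotient_smul_top hpb)

end AssociatedPrimes

/-- If `a` and `b` are geometrically linked by `I` over `M` (i.e. linked with
`aM ∩ bM = IM`), then `Ass(M/aM) ∩ Ass(M/bM) = ∅`. -/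
theorem ass_disjoint_of_geometrically_linked {R M : Type*} [CommRing R] [IsNoetherianRing R]
    [AddCommGroup M] [Module R M] [Module.Finite R M]
    (a b I : Ideal R) (h : Ideal.LinkedBy R M a b I)
    (hgeo : (a • ⊤ : Submodule R M) ⊓ (b • ⊤ : Submodule R M) = I • ⊤) :
    associatedPrimes R (M ⧸ (a • ⊤ : Submodule R M)) ∩
      associatedPrimes R (M ⧸ (b • ⊤ : Submodule R M)) = ∅ := by
  obtain ⟨-, -, -, -, -, hcolon⟩ := h
  exact ass_disjoint_of_geometrically_linked_general (IsNoetherian.noetherian b) hcolon.le hgeo.le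
end
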